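/- arXiv:2201.10754 — 2 statements merged into one kernel-verified Lean document; each statement's English description precedes it below -/
import Mathlib

section
/- Let Q be a commutative, integral quantale and (X,α) a symmetric Q-category. If μ : X → Q satisfies μ y * α x y ≤ μ x for all x, y (μ is a presheaf) and μ x * μ y ≤ α x y for all x, y (μ ∈ L X), then there exists μ̃ ∈ T X with μ x ≤ μ̃ x for all x ∈ X. -/
/-!
Call `ν : X → Q` *admissible* if `ν x * ν y ≤ α x y` for all `x, y`. Since multiplication preserves
suprema, the pointwise supremum of a chain of admissible functions is admissible, so Zorn's lemma
gives a maximal admissible `ν ≥ μ`. Admissibility says precisely `ν x ≤ ⨅ y, (ν y ⇨ α x y)`.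
Conversely, replacing the single value `ν x` by `q := ⨅ y, (ν y ⇨ α x y)` keeps the function
admissible: off the diagonal by the choice of `q`, and at `(x, x)` because `α x x = 1 = ⊤`.
Maximality then forces `q ≤ ν x`.
-/

/-- The residuation `p ⇨ r` of a quantale, right adjoint to multiplication:
`p * q ≤ r ↔ q ≤ qimp p r`. -/
def qimp {Q : Type*} [CompleteLattice Q] [Mul Q] (p r : Q) : Q :=
  sSup {q | p * q ≤ r}

/-- The tight span of a symmetric Q-category `(X, α)`. -/
def tightSpan {Q X : Type*} [CompleteLattice Q] [Mul Q] (α : X → X → Q) :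
    Set (X → Q) :=
  {μ | ∀ x, μ x = ⨅ y, qimp (μ y) (α x y)}

theorem le_qimp_iff {Q : Type*} [CompleteLattice Q] [CommMonoid Q] [IsQuantale Q] (p q r : Q) :
    q ≤ qimp p r ↔ p * q ≤ r := by
  refine ⟨fun h => ?_, fun h => le_sSup h⟩
  calc p * q ≤ p * sSup {q | p * q ≤ r} := mul_le_mul_right h p
    _ ≤ r := by
      rw [IsQuantale.mul_sSup_distrib]
      exact iSup₂_le fun _ h => h

/-- every presheaf `μ ∈ L X` is below some element of the tight span. -/
theorem exists_tightSpan_above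
    {Q : Type*} [CompleteLattice Q] [CommMonoid Q] [IsQuantale Q]
    (hint : (⊤ : Q) = 1)
    {X : Type*} (α : X → X → Q)
    (hα1 : ∀ x, α x x = 1)
    (hαsym : ∀ x y, α x y = α y x)
    (hαtrans : ∀ x y z, α y z * α x y ≤ α x z)
    (μ : X → Q)
    (hpre : ∀ x y, μ y * α x y ≤ μ x)
    (hL : ∀ x y, μ x * μ y ≤ α x y) :
    ∃ ν ∈ tightSpan α, ∀ x, μ x ≤ ν x := by
  classical
  obtain ⟨ν, hμν, hν⟩ := zorn_le_nonempty₀ {ν : X → Q | ∀ x y, ν x * ν y ≤ α x y}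
    (fun c hc hchain _ _ => by
      refine ⟨sSup c, fun x y => ?_, fun z hz => le_sSup hz⟩
      -- Residuating in each variable reduces the claim to two members of the chain.
      rw [← le_qimp_iff, sSup_apply]
      refine iSup_le fun g => ?_
      rw [le_qimp_iff, mul_comm, ← le_qimp_iff, sSup_apply]
      refine iSup_le fun f => ?_
      rw [le_qimp_iff]
      rcases hchain.total f.2 g.2 with h | h
      · exact (mul_comm _ _).trans_le ((mul_le_mul_left (h x) _).trans (hc g.2 x y))
      · exact (mul_comm _ _).trans_le ((mul_le_mul_right (h y) _).trans (hc f.2 x y)))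
    μ hL
  refine ⟨ν, fun x => le_antisymm ?_ ?_, hμν⟩
  · exact le_iInf fun y => (le_qimp_iff _ _ _).2 ((mul_comm _ _).trans_le (hν.prop x y))
  · set q := ⨅ y, qimp (ν y) (α x y) with hq
    have hqle (y : X) : ν y * q ≤ α x y := (le_qimp_iff _ _ _).1 (iInf_le _ y)
    have hνq : ν x ≤ q :=
      le_iInf fun y => (le_qimp_iff _ _ _).2 ((mul_comm _ _).trans_le (hν.prop x y))
    have hadm : ∀ a b, Function.update ν x q a * Function.update ν x q b ≤ α a b := by
      intro a b
      by_cases ha : a = x <;> by_cases hb : b = x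
      · subst ha hb
        rw [hα1, ← hint]
        exact le_top
      · subst ha
        simpa [hb, mul_comm] using hqle b
      · subst hb
        simpa [ha, hαsym a] using hqle a
      · simpa [ha, hb] using hν.prop a b
    have hle : ν ≤ Function.update ν x q := le_update_iff.2 ⟨hνq, fun _ _ => le_rfl⟩
    simpa using hν.le_of_ge hadm hle x
end

section
/- Let Q be a commutative, integral quantale and (X,α) a symmetric Q-category. The Yoneda embedding y : (X,α) → (T X, σ), y x := fun x' => α x' x, is essential: for every symmetric Q-category (Z,γ) and every Q-functor g : (T X, σ) → (Z,γ), if γ (g (y x)) (g (y x')) = α x x' for all x, x' ∈ X (i.e., g ∘ y is fully faithful), then γ (g μ) (g λ) = σ μ λ for all μ, λ ∈ T X (i.e., g is fully faithful). -/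
/-- The hom of the tight span: `σ μ λ = ⨅ x, (μ x ⇨ λ x)`. -/
def tsHom {Q X : Type*} [CompleteLattice Q] [Mul Q] (μ lam : X → Q) : Q :=
  ⨅ x, qimp (μ x) (lam x)

lemma le_qimp {Q : Type*} [CompleteLattice Q] [CommMonoid Q] [IsQuantale Q] {p q r : Q} :
    q ≤ qimp p r ↔ p * q ≤ r :=
  Quantale.rightMulResiduation_le_iff_mul_le

/-- The Yoneda map takes values in the tight span. -/
lemma yoneda_mem_tightSpan {Q X : Type*} [CompleteLattice Q] [CommMonoid Q] [IsQuantale Q]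
    {α : X → X → Q} (hα1 : ∀ x, α x x = 1) (hαsym : ∀ x y, α x y = α y x)
    (hαtrans : ∀ x y z, α y z * α x y ≤ α x z) (x : X) :
    (fun y => α y x) ∈ tightSpan α := by
  intro z
  apply le_antisymm
  · refine le_iInf fun y => le_qimp.2 ?_
    change α y x * α z x ≤ α z y
    rw [hαsym y x]
    exact hαtrans z x y
  · -- At `y = x` the residuation is `1 ⇨ α z x`.
    refine (iInf_le _ x).trans ?_
    simpa [hα1] using (le_qimp (p := α x x) (r := α z x)).1 le_rfl

lemma mul_le_of_mem_tightSpan {Q X : Type*} [CompleteLattice Q] [CommMonoid Q] [IsQuantale Q]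
    {α : X → X → Q} {μ : X → Q} (hμ : μ ∈ tightSpan α) (x y : X) :
    μ y * μ x ≤ α x y :=
  le_qimp.1 ((hμ x).le.trans (iInf_le _ y))

/-- The half of the Yoneda lemma `σ (y x) μ = μ x` that holds because `μ` is a presheaf. -/
lemma le_tsHom_yoneda {Q X : Type*} [CompleteLattice Q] [CommMonoid Q] [IsQuantale Q]
    {α : X → X → Q} (hαtrans : ∀ x y z, α y z * α x y ≤ α x z)
    {μ : X → Q} (hμ : μ ∈ tightSpan α) (x : X) :
    μ x ≤ tsHom (fun y => α y x) μ := by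
  refine le_iInf fun y => le_qimp.2 ?_
  rw [hμ y]
  refine le_iInf fun z => le_qimp.2 ?_
  calc μ z * (α y x * μ x) = μ z * μ x * α y x := by rw [mul_comm (α y x), mul_assoc]
    _ ≤ α x z * α y x := mul_le_mul_left (mul_le_of_mem_tightSpan hμ x z) _
    _ ≤ α y z := hαtrans y x z

/-- the Yoneda embedding `X → T X` is essential. -/
theorem yoneda_essential
    {Q : Type*} [CompleteLattice Q] [CommMonoid Q] [IsQuantale Q]
    (hint : (⊤ : Q) = 1)
    {X : Type*} (α : X → X → Q)
    (hα1 : ∀ x, α x x = 1)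
    (hαsym : ∀ x y, α x y = α y x)
    (hαtrans : ∀ x y z, α y z * α x y ≤ α x z)
    {Z : Type*} (γ : Z → Z → Q)
    (hγ1 : ∀ z, γ z z = 1)
    (hγsym : ∀ z z', γ z z' = γ z' z)
    (hγtrans : ∀ x y z, γ y z * γ x y ≤ γ x z)
    (g : (X → Q) → Z)
    (hg : ∀ μ ∈ tightSpan α, ∀ lam ∈ tightSpan α, tsHom μ lam ≤ γ (g μ) (g lam))
    (hgy : ∀ x x' : X, γ (g (fun y => α y x)) (g (fun y => α y x')) = α x x') :
    ∀ μ ∈ tightSpan α, ∀ lam ∈ tightSpan α, γ (g μ) (g lam) = tsHom μ lam := by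
  intro μ hμ lam hlam
  have key : ∀ ν ∈ tightSpan α, ∀ x, ν x ≤ γ (g (fun y => α y x)) (g ν) := fun ν hν x =>
    (le_tsHom_yoneda hαtrans hν x).trans
      (hg _ (yoneda_mem_tightSpan hα1 hαsym hαtrans x) _ hν)
  refine le_antisymm (le_iInf fun x => le_qimp.2 ?_) (hg μ hμ lam hlam)
  rw [hlam x]
  refine le_iInf fun y => le_qimp.2 ?_
  rw [← hgy x y]
  have hy := key lam hlam y
  rw [hγsym] at hy
  refine (mul_le_mul' hy ?_).trans (hγtrans _ (g lam) _)
  rw [mul_comm]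
  exact (mul_le_mul' le_rfl (key μ hμ x)).trans (hγtrans _ (g μ) _)
end
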